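/- Existence of an optimal deterministic stationary policy: let S and A be nonempty finite types, P : A → Matrix S S ℝ with each P a row-stochastic, R : S → ℝ, and γ ∈ ℝ with 0 ≤ γ < 1. Then there exists a deterministic policy π : S → A such that for every deterministic policy π' : S → A and every s ∈ S, V^π(s) ≥ V^{π'}(s), where V^σ = (I − γ·P^σ)⁻¹ *ᵥ R and P^σ(s,j) = (P (σ s))(s,j) for any deterministic policy σ. -/

import Mathlib

open Matrix BigOperators

/-- A matrix is row-stochastic if all entries are nonnegative and every row sums to 1. -/
def RowStochastic {S : Type*} [Fintype S] (P : Matrix S S ℝ) : Prop :=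
  (∀ i j, 0 ≤ P i j) ∧ (∀ i, ∑ j, P i j = 1)

/-- The transition matrix `P^π` of a deterministic policy `π`:
`P^π(s, j) = (P (π s))(s, j)`. -/
def polMat {S A : Type*} (P : A → Matrix S S ℝ) (π : S → A) : Matrix S S ℝ :=
  Matrix.of fun s j => P (π s) s j

/-- The value vector `V^π = (I - γ • P^π)⁻¹ *ᵥ R` of a deterministic policy `π`. -/
noncomputable def polVal {S A : Type*} [Fintype S] [DecidableEq S]
    (P : A → Matrix S S ℝ) (γ : ℝ) (R : S → ℝ) (π : S → A) : S → ℝ :=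
  (1 - γ • polMat P π)⁻¹ *ᵥ R

/-!
Two policies can be pasted into one that dominates both: in each state follow the policy of larger
value there. The pointwise maximum of the two values is a subsolution of the Bellman equation of the
pasted policy, so it lies below that policy's value by the maximum principle. Hence the values of
policies form a directed family, and a finite directed family has a greatest element.
-/

/-- Matrices with nonnegative entries and all row sums `< 1`, such as `γ • P` for a stochastic `P`
and a discount factor `γ ∈ [0, 1)`; the comparison principle for `1 - Q` holds for them. -/
structure StrictlySubstochastic {n K : Type*} [Fintype n] [Semiring K] [PartialOrder K]
    (Q : Matrix n n K) : Prop where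
  nonneg : ∀ i j, 0 ≤ Q i j
  row_sum_lt_one : ∀ i, ∑ j, Q i j < 1

namespace StrictlySubstochastic

section Ring

variable {n K : Type*} [Fintype n] [Ring K] [LinearOrder K] [IsStrictOrderedRing K]
  {Q : Matrix n n K}

theorem nonpos_of_le_mulVec (hQ : StrictlySubstochastic Q) {x : n → K} (hx : x ≤ Q *ᵥ x) :
    x ≤ 0 := by
  intro i
  have : Nonempty n := ⟨i⟩
  obtain ⟨m, hm⟩ := Finite.exists_max x
  suffices x m ≤ 0 from (hm i).trans this
  by_contra! hpos
  refine lt_irrefl (x m) ?_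
  calc
    x m ≤ ∑ j, Q m j * x j := hx m
    _ ≤ ∑ j, Q m j * x m :=
      Finset.sum_le_sum fun j _ => mul_le_mul_of_nonneg_left (hm j) (hQ.nonneg m j)
    _ = (∑ j, Q m j) * x m := (Finset.sum_mul ..).symm
    _ < x m := mul_lt_of_lt_one_left hpos (hQ.row_sum_lt_one m)

theorem le_of_one_sub_mulVec_le [DecidableEq n] (hQ : StrictlySubstochastic Q) {x y : n → K}
    (h : (1 - Q) *ᵥ x ≤ (1 - Q) *ᵥ y) : x ≤ y := by
  rw [← sub_nonpos, ← mulVec_sub, sub_mulVec, one_mulVec, sub_nonpos] at h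
  exact sub_nonpos.1 (hQ.nonpos_of_le_mulVec h)

end Ring

section Field

variable {n K : Type*} [Fintype n] [DecidableEq n] [Field K] [LinearOrder K]
  [IsStrictOrderedRing K] {Q : Matrix n n K}

theorem isUnit_one_sub (hQ : StrictlySubstochastic Q) : IsUnit (1 - Q) :=
  mulVec_injective_iff_isUnit.1 fun _ _ h =>
    le_antisymm (hQ.le_of_one_sub_mulVec_le h.le) (hQ.le_of_one_sub_mulVec_le h.ge)

theorem one_sub_mulVec_inv_mulVec (hQ : StrictlySubstochastic Q) (b : n → K) :
    (1 - Q) *ᵥ ((1 - Q)⁻¹ *ᵥ b) = b := by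
  rw [mulVec_mulVec, mul_nonsing_inv _ ((isUnit_iff_isUnit_det _).1 hQ.isUnit_one_sub),
    one_mulVec]

theorem one_sub_inv_mulVec_eq_add (hQ : StrictlySubstochastic Q) (b : n → K) :
    (1 - Q)⁻¹ *ᵥ b = b + Q *ᵥ ((1 - Q)⁻¹ *ᵥ b) := by
  rw [← sub_eq_iff_eq_add]
  simpa only [sub_mulVec, one_mulVec] using hQ.one_sub_mulVec_inv_mulVec b

theorem le_one_sub_inv_mulVec (hQ : StrictlySubstochastic Q) {b x : n → K} (hx : x ≤ b + Q *ᵥ x) :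
    x ≤ (1 - Q)⁻¹ *ᵥ b := by
  apply hQ.le_of_one_sub_mulVec_le
  rwa [hQ.one_sub_mulVec_inv_mulVec, sub_mulVec, one_mulVec, sub_le_iff_le_add]

end Field

end StrictlySubstochastic

theorem RowStochastic.strictlySubstochastic_smul {S : Type*} [Fintype S] {P : Matrix S S ℝ}
    (hP : RowStochastic P) {γ : ℝ} (hγ0 : 0 ≤ γ) (hγ1 : γ < 1) :
    StrictlySubstochastic (γ • P) where
  nonneg i j := mul_nonneg hγ0 (hP.1 i j)
  row_sum_lt_one i := by simpa [← Finset.mul_sum, hP.2 i] using hγ1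

section Policy

variable {S A : Type*} [Fintype S] {P : A → Matrix S S ℝ} {γ : ℝ}

theorem strictlySubstochastic_smul_polMat (hP : ∀ a, StrictlySubstochastic (γ • P a))
    (π : S → A) : StrictlySubstochastic (γ • polMat P π) where
  nonneg s := (hP (π s)).nonneg s
  row_sum_lt_one s := (hP (π s)).row_sum_lt_one s

variable [DecidableEq S]

theorem directed_polVal (hP : ∀ a, StrictlySubstochastic (γ • P a)) (r : S → A → ℝ) :
    Directed (· ≤ ·) fun π : S → A => polVal P γ (fun s => r s (π s)) π := by
  set V := fun π : S → A => polVal P γ (fun s => r s (π s)) π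
  have bellman_le (π : S → A) {v : S → ℝ} (hv : V π ≤ v) (s : S) :
      V π s ≤ r s (π s) + ((γ • P (π s)) *ᵥ v) s := calc
    V π s = r s (π s) + ((γ • P (π s)) *ᵥ V π) s :=
      congrFun ((strictlySubstochastic_smul_polMat hP π).one_sub_inv_mulVec_eq_add _) s
    _ ≤ r s (π s) + ((γ • P (π s)) *ᵥ v) s := by
      gcongr
      exact dotProduct_le_dotProduct_of_nonneg_left hv ((hP (π s)).nonneg s)
  intro π σ
  let τ : S → A := fun s => if V σ s ≤ V π s then π s else σ s
  have sup_le_value : V π ⊔ V σ ≤ V τ := by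
    refine (strictlySubstochastic_smul_polMat hP τ).le_one_sub_inv_mulVec fun s => ?_
    change V π s ⊔ V σ s ≤ r s (τ s) + ((γ • P (τ s)) *ᵥ (V π ⊔ V σ)) s
    by_cases h : V σ s ≤ V π s
    · rw [sup_of_le_left h, show τ s = π s from if_pos h]
      exact bellman_le π le_sup_left s
    · rw [sup_of_le_right (le_of_not_ge h), show τ s = σ s from if_neg h]
      exact bellman_le σ le_sup_right s
  exact ⟨τ, le_sup_left.trans sup_le_value, le_sup_right.trans sup_le_value⟩

theorem exists_optimal_deterministic_policy_general [Finite A] [Nonempty A]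
    (hP : ∀ a, StrictlySubstochastic (γ • P a)) (r : S → A → ℝ) :
    ∃ π : S → A, ∀ π' : S → A, ∀ s : S,
      polVal P γ (fun t => r t (π' t)) π' s ≤ polVal P γ (fun t => r t (π t)) π s :=
  (directed_polVal hP r).finite_le id

end Policy

/-- Existence of an optimal deterministic stationary policy. -/
theorem exists_optimal_deterministic_policy {S A : Type*} [Fintype S] [DecidableEq S]
    [Nonempty S] [Fintype A] [Nonempty A] (P : A → Matrix S S ℝ)
    (hP : ∀ a, RowStochastic (P a)) (R : S → ℝ) (γ : ℝ) (hγ0 : 0 ≤ γ) (hγ1 : γ < 1) :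
    ∃ π : S → A, ∀ π' : S → A, ∀ s : S, polVal P γ R π' s ≤ polVal P γ R π s :=
  exists_optimal_deterministic_policy_general
    (fun a => (hP a).strictlySubstochastic_smul hγ0 hγ1) fun s _ => R s
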